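/- Let $p$ and $q$ be distinct odd primes and let $E$ be the $pq$-th cyclotomic field. Let $i$ be an integer with $1 \le i \le p-3$ such that $q^i \not\equiv 1 \pmod{p}$, let $\nu$ be an integer whose residue generates $(\mathbb{Z}/p\mathbb{Z})^{\times}$, and set $U_i := U_i(\nu)$, a nonzero real number. Let $u \in \mathbb{R}$ be the unique real $p$-th root of $U_i$, let $F^+ := \mathbb{Q}(\zeta_p + \zeta_p^{-1})$ be the maximal real subfield of $\mathbb{Q}(\zeta_p)$, and let $M_i := E(\alpha_{i,1}, \ldots, \alpha_{i,(q-1)/2}) \subseteq \mathbb{C}$, where each $\alpha_{i,j} \in \mathbb{C}$ is a $p$-th root of $\eta'_{i,j}$. Then $[M_i : E] \ge [E(u) : E]$ and $[E(u) : E] = [F^+(u) : F^+]$. -/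

import Mathlib

/-!
Both sides of the inequality are compared through `p`-th powers. For a field `K` containing
`ζ_p` and `ζ_q`, the group `A = Kˣ / (Kˣ)^p` is a vector space over `ZMod p`; write `lg : K → A`
for the class map. Put `V = ∑_s s^i • lg (1 - ζ_p^s)`. Substituting `s ↦ bs` in such weighted
sums multiplies them by `b^{-i}`, and `∑_s s^{i+1} = 0` in `ZMod p` because `i + 1 < p - 1`, which
removes the root-of-unity factors. Consequently `lg U_i(ν) = (ν^{-i} - 1) • V`. On the other hand
`∏_j (1 - ω^j x) = 1 - x^q` for `ω = ζ_q`, so the classes of all `η'_{i,j}`, `j ∈ ZMod q`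
(the class of index `0` is `V`), add up to `q^{-i} • V`.

Take `K = M_i`. The `η'_{i,j}` with `1 ≤ j ≤ (q-1)/2` are `p`-th powers in `K`, hence also those
with `q - j` in place of `j`, since `lg η'_{i,-j} = (-1)^i • lg η'_{i,j}`. The sum formula then
reads `V = q^{-i} • V`, and `q^i ≢ 1` forces `V = 0`. So `U_i(ν)` is a `p`-th power in `M_i`
(`core`), and `u ∈ M_i` because `ζ_p ∈ M_i`.

For the equality of degrees, `X^p - U_i` is either irreducible or has a root in the base field, so
each degree is `p` or `1`, and it is enough that `u ∈ E` implies `u ∈ F⁺` (`descend`). Otherwise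
some embedding of `E` over `F⁺` sends `u` to `ζ_p u`; embeddings of a cyclotomic field commute with
complex conjugation, so `ζ_p u` would be real, which is absurd.
-/


/-- `ζ_m = e^{2πi/m}`. -/
noncomputable def primRoot (m : ℕ) : ℂ := Complex.exp (2 * (Real.pi : ℂ) * Complex.I / (m : ℂ))

/-- The `pq`-th cyclotomic field `E = ℚ(ζ_p, ζ_q)` as a subfield of `ℂ`. -/
noncomputable def cycField (p q : ℕ) : IntermediateField ℚ ℂ :=
  IntermediateField.adjoin ℚ ({primRoot p, primRoot q} : Set ℂ)

/-- The maximal real subfield `F⁺ = ℚ(ζ_p + ζ_p⁻¹)` of `ℚ(ζ_p)`, inside `ℂ`. -/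
noncomputable def maxRealSubfield (p : ℕ) : IntermediateField ℚ ℂ :=
  IntermediateField.adjoin ℚ ({primRoot p + (primRoot p)⁻¹} : Set ℂ)

/-- `η'_{i,j} = ∏_{s=0}^{p-1} (1 - ζ_q^j ζ_p^s)^{s^i}` (with `0^0 = 1`). -/
noncomputable def etaElt' (p q i j : ℕ) : ℂ :=
  ∏ s ∈ Finset.range p, (1 - primRoot q ^ j * primRoot p ^ s) ^ (s ^ i)

/-- `U_i(b) = ∏_{s=1}^{p-1} (ζ_p^{(p+1)(1-b)s/2} · (1-ζ_p^{bs})/(1-ζ_p^s))^{s^i}`. -/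
noncomputable def cycUnit (p i : ℕ) (b : ℤ) : ℂ :=
  ∏ s ∈ Finset.Icc 1 (p - 1),
    (primRoot p ^ ((((p + 1) / 2 : ℕ) : ℤ) * (1 - b) * (s : ℤ)) *
      ((1 - primRoot p ^ (b * (s : ℤ))) / (1 - primRoot p ^ s))) ^ (s ^ i)

/-! ### Classes modulo `p`-th powers -/

/-- A class map `lg` from `K` to the `ZMod p`-vector space `Kˣ / (Kˣ)^p`, written additively.
It is only meaningful on nonzero elements. -/
theorem exists_pthPowerLog.{u} (K : Type u) [Field K] (p : ℕ) :
    ∃ (A : Type u) (_ : AddCommGroup A) (_ : Module (ZMod p) A) (lg : K → A),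
      (∀ x y, x ≠ 0 → y ≠ 0 → lg (x * y) = lg x + lg y) ∧
      (∀ x, x ≠ 0 → (lg x = 0 ↔ ∃ y, y ^ p = x)) := by
  classical
  let N : Subgroup Kˣ := (powMonoidHom p : Kˣ →* Kˣ).range
  have hN : ∀ x : Additive (Kˣ ⧸ N), p • x = 0 := by
    intro x
    obtain ⟨y, hy⟩ := QuotientGroup.mk_surjective x.toMul
    have : x = Additive.ofMul (y : Kˣ ⧸ N) := by rw [hy]; rfl
    rw [this, ← ofMul_pow, ← QuotientGroup.mk_pow]
    exact congrArg Additive.ofMul ((QuotientGroup.eq_one_iff _).2 ⟨y, rfl⟩)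
  refine ⟨Additive (Kˣ ⧸ N), inferInstance, AddCommGroup.zmodModule hN,
    fun x => if h : x = 0 then 0 else Additive.ofMul ((Units.mk0 x h : Kˣ) : Kˣ ⧸ N), ?_, ?_⟩
  · intro x y hx hy
    simp only [hx, hy, mul_ne_zero hx hy, dite_false]
    rw [Units.mk0_mul, QuotientGroup.mk_mul, ofMul_mul]
  · intro x hx
    simp only [hx, dite_false]
    rw [ofMul_eq_zero, QuotientGroup.eq_one_iff]
    constructor
    · rintro ⟨y, hy⟩
      exact ⟨y, by simpa using congrArg Units.val hy⟩
    · rintro ⟨y, hy⟩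
      have hy0 : y ≠ 0 ∨ p = 0 := by
        by_contra! h
        apply hx; rw [← hy, h.1, zero_pow h.2]
      rcases hy0 with hy0 | hp
      · exact ⟨Units.mk0 y hy0, by ext; simpa using hy⟩
      · subst hp
        exact ⟨1, by ext; simpa using hy⟩

section Log

variable {K A : Type*} [Field K] {p : ℕ} [AddCommGroup A] [Module (ZMod p) A] {lg : K → A}

theorem lg_one (hm : ∀ x y, x ≠ 0 → y ≠ 0 → lg (x * y) = lg x + lg y) : lg 1 = 0 := by
  simpa using hm 1 1 one_ne_zero one_ne_zero

theorem lg_pow (hm : ∀ x y, x ≠ 0 → y ≠ 0 → lg (x * y) = lg x + lg y) {x : K} (hx : x ≠ 0)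
    (n : ℕ) : lg (x ^ n) = (n : ZMod p) • lg x := by
  induction n with
  | zero => simp [lg_one hm]
  | succ n ih => rw [pow_succ, hm _ _ (pow_ne_zero _ hx) hx, ih]; push_cast; rw [add_smul, one_smul]

theorem lg_inv (hm : ∀ x y, x ≠ 0 → y ≠ 0 → lg (x * y) = lg x + lg y) {x : K} (hx : x ≠ 0) :
    lg x⁻¹ = - lg x := by
  have := hm x x⁻¹ hx (inv_ne_zero hx)
  rw [mul_inv_cancel₀ hx, lg_one hm] at this
  exact (neg_eq_of_add_eq_zero_right this.symm).symm

theorem lg_div (hm : ∀ x y, x ≠ 0 → y ≠ 0 → lg (x * y) = lg x + lg y) {x y : K} (hx : x ≠ 0)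
    (hy : y ≠ 0) : lg (x / y) = lg x - lg y := by
  rw [div_eq_mul_inv, hm _ _ hx (inv_ne_zero hy), lg_inv hm hy, sub_eq_add_neg]

theorem lg_prod (hm : ∀ x y, x ≠ 0 → y ≠ 0 → lg (x * y) = lg x + lg y) {ι : Type*}
    (s : Finset ι) (F : ι → K) (hF : ∀ k ∈ s, F k ≠ 0) :
    lg (∏ k ∈ s, F k) = ∑ k ∈ s, lg (F k) := by
  classical
  induction s using Finset.induction_on with
  | empty => simp [lg_one hm]
  | insert a s ha ih =>
    rw [Finset.prod_insert ha, Finset.sum_insert ha, hm _ _ (hF _ (by simp))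
      (Finset.prod_ne_zero_iff.2 fun k hk => hF k (by simp [hk])), ih fun k hk => hF k (by simp [hk])]

theorem sum_range_eq_sum_zmod {B : Type*} [AddCommMonoid B] {n : ℕ} [NeZero n] (F : ℕ → B) :
    ∑ s ∈ Finset.range n, F s = ∑ s : ZMod n, F s.val := by
  symm
  refine Finset.sum_bij (fun s _ => s.val) (fun s _ => Finset.mem_range.2 s.val_lt)
    (fun a _ b _ h => ZMod.val_injective n h) (fun s hs => ⟨(s : ZMod n), Finset.mem_univ _, ?_⟩)
    (fun _ _ => rfl)
  exact ZMod.val_cast_of_lt (Finset.mem_range.1 hs)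

/-- The term `s = 0` has weight `0^i = 0`, so the sum may run over all of `ZMod p`. -/
theorem lg_weighted_Icc [NeZero p] (hm : ∀ x y, x ≠ 0 → y ≠ 0 → lg (x * y) = lg x + lg y)
    {i : ℕ} (hi : 1 ≤ i) (F : ℕ → K) (hF : ∀ s, 1 ≤ s → s < p → F s ≠ 0) :
    lg (∏ s ∈ Finset.Icc 1 (p - 1), F s ^ (s ^ i)) = ∑ s : ZMod p, s ^ i • lg (F s.val) := by
  have hp : 0 < p := Nat.pos_of_ne_zero (NeZero.ne p)
  have hF' : ∀ s ∈ Finset.Icc 1 (p - 1), F s ≠ 0 := by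
    intro s hs
    rw [Finset.mem_Icc] at hs
    exact hF s hs.1 (by omega)
  rw [lg_prod hm _ _ fun s hs => pow_ne_zero _ (hF' s hs)]
  have h1 : ∑ s : ZMod p, s ^ i • lg (F s.val)
      = ∑ s ∈ Finset.range p, (s : ZMod p) ^ i • lg (F s) := by
    rw [sum_range_eq_sum_zmod (fun s : ℕ => (s : ZMod p) ^ i • lg (F s))]
    simp
  rw [h1]
  trans ∑ s ∈ Finset.Icc 1 (p - 1), (s : ZMod p) ^ i • lg (F s)
  · refine Finset.sum_congr rfl fun s hs => ?_
    rw [lg_pow (p := p) hm (hF' s hs)]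
    push_cast; rfl
  · refine Finset.sum_subset ?_ ?_
    · intro s hs
      simp only [Finset.mem_Icc, Finset.mem_range] at hs ⊢
      omega
    · intro s hs hs'
      simp only [Finset.mem_Icc, Finset.mem_range] at hs hs'
      have : s = 0 := by omega
      subst this
      simp [zero_pow (show i ≠ 0 by omega)]

end Log

theorem zpow_congr_zmod {K : Type*} [Field K] {n : ℕ} {ζ : K} (h : ζ ^ n = 1) (h0 : ζ ≠ 0)
    {a b : ℤ} (hab : (a : ZMod n) = b) : ζ ^ a = ζ ^ b := by
  obtain ⟨c, hc⟩ := (ZMod.intCast_eq_intCast_iff_dvd_sub a b n).1 hab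
  have : b = a + n * c := by rw [← hc]; ring
  rw [this, zpow_add₀ h0, zpow_mul, zpow_natCast, h, one_zpow, mul_one]

/-- The substitution `s ↦ b s` scales a sum weighted by `s^i` by `b^{-i}`. -/
theorem weighted_sum_comp_mul {A : Type*} {p : ℕ} [Fact p.Prime] [AddCommGroup A]
    [Module (ZMod p) A] (f : ZMod p → A) (i : ℕ) {b : ZMod p} (hb : b ≠ 0) :
    b ^ i • ∑ s : ZMod p, s ^ i • f (b * s) = ∑ s : ZMod p, s ^ i • f s := by
  rw [Finset.smul_sum, ← Equiv.sum_comp (Equiv.mulLeft₀ b hb) fun s => s ^ i • f s]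
  exact Finset.sum_congr rfl fun s _ => by simp [smul_smul, mul_pow]

/-! ### `U_i(ν)` becomes a `p`-th power with the `η'_{i,j}` -/

/-- If the first half of the `η'_{i,j}` are `p`-th powers in a field containing the roots of unity,
then so is `U_i(ν)`. -/
theorem core {K : Type*} [Field K] {p q : ℕ} [Fact p.Prime] [Fact q.Prime]
    (hpo : Odd p) (hqo : Odd q) (hpq : p ≠ q) {ζ ω : K}
    (hζ : IsPrimitiveRoot ζ p) (hω : IsPrimitiveRoot ω q) {i : ℕ} (hi1 : 1 ≤ i) (hi : i + 1 < p - 1)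
    (hqi : ((q : ZMod p)) ^ i ≠ 1) {ν : ℤ} (hν : (ν : ZMod p) ≠ 0)
    (hα : ∀ j : ℕ, 1 ≤ j → j ≤ (q - 1) / 2 → ∃ y : K,
      y ^ p = ∏ s ∈ Finset.range p, (1 - ω ^ j * ζ ^ s) ^ (s ^ i)) :
    ∃ y : K, y ^ p = ∏ s ∈ Finset.Icc 1 (p - 1),
      (ζ ^ ((((p + 1) / 2 : ℕ) : ℤ) * (1 - ν) * (s : ℤ)) *
      ((1 - ζ ^ (ν * (s : ℤ))) / (1 - ζ ^ s))) ^ (s ^ i) := by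
  have hp : p.Prime := Fact.out
  have hq : q.Prime := Fact.out
  have hζ0 : ζ ≠ 0 := hζ.ne_zero hp.ne_zero
  have hω0 : ω ≠ 0 := hω.ne_zero hq.ne_zero
  obtain ⟨A, _, _, lg, hm, hk⟩ := exists_pthPowerLog K p
  have hcop : Nat.Coprime p q := (Nat.coprime_primes hp hq).2 hpq
  have hq0 : (q : ZMod p) ≠ 0 := by
    rw [Ne, ZMod.natCast_eq_zero_iff]
    exact fun h => hpq ((Nat.prime_dvd_prime_iff_eq hp hq).1 h)
  -- `1 - ζ^n` vanishes only when `p ∣ n`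
  have hnz1 : ∀ n : ℤ, (n : ZMod p) ≠ 0 → 1 - ζ ^ n ≠ 0 := by
    intro n hn h
    apply hn
    rw [ZMod.intCast_zmod_eq_zero_iff_dvd]
    exact (hζ.zpow_eq_one_iff_dvd n).1 (sub_eq_zero.1 h).symm
  have hnz2 : ∀ (j : ZMod q) (s : ZMod p), (j ≠ 0 ∨ s ≠ 0) → 1 - ω ^ j.val * ζ ^ s.val ≠ 0 := by
    intro j s hjs h
    have h1 : ω ^ j.val * ζ ^ s.val = 1 := (sub_eq_zero.1 h).symm
    have hj : j = 0 := by
      have : ω ^ (j.val * p) = 1 := by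
        have := congrArg (· ^ p) h1
        simp only [mul_pow, one_pow] at this
        rwa [← pow_mul ζ, mul_comm s.val, pow_mul ζ, hζ.pow_eq_one, one_pow, mul_one, ← pow_mul]
          at this
      have := (hω.pow_eq_one_iff_dvd _).1 this
      have := hcop.symm.dvd_of_dvd_mul_right this
      rw [← ZMod.natCast_eq_zero_iff] at this
      simpa using this
    have hs : s = 0 := by
      subst hj
      rw [ZMod.val_zero, pow_zero, one_mul] at h1
      have := (hζ.pow_eq_one_iff_dvd _).1 h1
      rw [← ZMod.natCast_eq_zero_iff] at this
      simpa using this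
    exact hjs.elim (· hj) (· hs)
  -- `ω` has order prime to `p`, so its class in a group of exponent `p` is trivial
  have hlgω : lg ω = 0 := by
    have h := lg_pow (p := p) hm hω0 q
    rw [hω.pow_eq_one, lg_one hm] at h
    exact (smul_eq_zero.1 h.symm).resolve_left hq0
  have hlgneg : lg (-1) = 0 := (hk _ (by simp)).2 ⟨-1, hpo.neg_one_pow⟩
  have hlgζ : ∀ n : ℤ, lg (ζ ^ n) = (n : ZMod p) • lg ζ := by
    intro n
    have : ζ ^ n = ζ ^ (n : ZMod p).val := by
      rw [← zpow_natCast]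
      exact zpow_congr_zmod hζ.pow_eq_one hζ0 (by simp)
    rw [this, lg_pow (p := p) hm hζ0]; simp
  let f : ZMod p → A := fun s => lg (1 - ζ ^ s.val)
  let g : ZMod q → ZMod p → A := fun j s => lg (1 - ω ^ j.val * ζ ^ s.val)
  let V : A := ∑ s : ZMod p, s ^ i • f s
  let H : ZMod q → A := fun j => ∑ s : ZMod p, s ^ i • g j s
  have hf : ∀ n : ℤ, lg (1 - ζ ^ n) = f n := by
    intro n
    simp only [f]
    rw [← zpow_natCast]
    congr 2
    exact zpow_congr_zmod hζ.pow_eq_one hζ0 (by simp)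
  -- this disposes of the powers of `ζ`
  have hsum1 : ∀ a : A, ∑ s : ZMod p, s ^ i • s • a = 0 := by
    intro a
    simp only [smul_smul, ← pow_succ]
    rw [← Finset.sum_smul, FiniteField.sum_pow_lt_card_sub_one (ZMod p) (i + 1) (by rwa [ZMod.card]),
      zero_smul]
  -- although `η'_{i,0}` has a zero factor at `s = 0`, that factor has weight `0` in `H 0`
  have hH0 : H 0 = V := by simp [H, V, g, f]
  -- `1 - ω^{-j} ζ^s = -ω^{-j} ζ^s (1 - ω^j ζ^{-s})`, where `-1` and `ω` are `p`-th powers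
  have hHneg : ∀ j : ZMod q, j ≠ 0 → H (-j) = (-1 : ZMod p) ^ i • H j := by
    intro j hj
    have key : ∀ s, g (-j) s = s • lg ζ + g j (-1 * s) := by
      intro s
      have e1 : (1 - ω ^ (-j).val * ζ ^ s.val) =
          -1 * ω ^ (-j).val * ζ ^ s.val * (1 - ω ^ j.val * ζ ^ (-1 * s).val) := by
        have a1 : ω ^ (-j).val * ω ^ j.val = 1 := by
          rw [← pow_add, ← zpow_natCast,
            zpow_congr_zmod hω.pow_eq_one hω0 (b := 0) (by simp), zpow_zero]
        have a2 : ζ ^ s.val * ζ ^ (-1 * s).val = 1 := by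
          rw [← pow_add, ← zpow_natCast,
            zpow_congr_zmod hζ.pow_eq_one hζ0 (b := 0) (by simp), zpow_zero]
        linear_combination (-1 : K) * a1 - (ω ^ (-j).val * ω ^ j.val) * a2
      simp only [g]
      have n1 : (-1 : K) ≠ 0 := by simp
      have n2 := pow_ne_zero (-j).val hω0
      have n3 := pow_ne_zero s.val hζ0
      rw [e1, hm _ _ (mul_ne_zero (mul_ne_zero n1 n2) n3) (hnz2 _ _ (Or.inl hj)),
        hm _ _ (mul_ne_zero n1 n2) n3, hm _ _ n1 n2, hlgneg, lg_pow (p := p) hm hω0, hlgω,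
        lg_pow (p := p) hm hζ0]
      simp
    have hw := weighted_sum_comp_mul (g j) i (b := (-1 : ZMod p)) (by simp)
    simp only [H]
    rw [Finset.sum_congr rfl fun s _ => by rw [key s, smul_add], Finset.sum_add_distrib, hsum1,
      zero_add, ← hw]
    rw [smul_smul, ← mul_pow]
    simp
  have hHhalf : ∀ j : ZMod q, j ≠ 0 → j.val ≤ (q - 1) / 2 → H j = 0 := by
    intro j hj hj'
    have h1 : 1 ≤ j.val := Nat.one_le_iff_ne_zero.2 (by simpa using hj)
    obtain ⟨y, hy⟩ := hα j.val h1 hj'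
    have hne : ∀ s ∈ Finset.range p, (1 - ω ^ j.val * ζ ^ s) ≠ 0 := by
      intro s hs
      have := hnz2 j (s : ZMod p) (Or.inl hj)
      rwa [ZMod.val_cast_of_lt (Finset.mem_range.1 hs)] at this
    have h2 := (hk _ (Finset.prod_ne_zero_iff.2 fun s hs => pow_ne_zero (s ^ i) (hne s hs))).2 ⟨y, hy⟩
    rw [lg_prod hm _ _ fun s hs => pow_ne_zero _ (hne s hs), Finset.sum_congr rfl fun s hs =>
      lg_pow (p := p) hm (hne s hs) (s ^ i), sum_range_eq_sum_zmod] at h2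
    simpa [H, g] using h2
  have hH : ∀ j : ZMod q, j ≠ 0 → H j = 0 := by
    intro j hj
    by_cases h : j.val ≤ (q - 1) / 2
    · exact hHhalf j hj h
    · have h' : (-j).val ≤ (q - 1) / 2 := by
        have : NeZero j := ⟨hj⟩
        rw [ZMod.val_neg_of_ne_zero]
        obtain ⟨m, hm⟩ := hqo
        omega
      have := hHneg (-j) (neg_ne_zero.2 hj)
      rw [neg_neg, hHhalf (-j) (neg_ne_zero.2 hj) h', smul_zero] at this
      exact this
  -- `∏_j (1 - ω^j ζ^s) = 1 - ζ^{qs}`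
  have hdist : ∀ s : ZMod p, s ≠ 0 → ∑ j : ZMod q, g j s = f (q * s) := by
    intro s hs
    have h1 : f (q * s) = lg (1 - ζ ^ (s.val * q)) := by
      have := hf ((s.val * q : ℕ) : ℤ)
      rw [zpow_natCast] at this
      rw [this]; congr 1; push_cast; simp [mul_comm]
    have h2 : 1 - ζ ^ (s.val * q) = ∏ j : ZMod q, (1 - ω ^ j.val * ζ ^ s.val) := by
      have := hω.pow_sub_pow_eq_prod_sub_mul 1 (ζ ^ s.val) hq.pos
      rw [one_pow, ← pow_mul] at this
      rw [this]
      symm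
      refine Finset.prod_bij (fun j _ => ω ^ j.val) ?_ ?_ ?_ (fun _ _ => rfl)
      · intro j _
        rw [Polynomial.mem_nthRootsFinset hq.pos, ← pow_mul, mul_comm, pow_mul, hω.pow_eq_one,
          one_pow]
      · intro a _ b _ h
        exact ZMod.val_injective q (hω.pow_inj a.val_lt b.val_lt h)
      · intro x hx
        rw [Polynomial.mem_nthRootsFinset hq.pos] at hx
        obtain ⟨k, hk, rfl⟩ := hω.eq_pow_of_pow_eq_one hx
        exact ⟨(k : ZMod q), Finset.mem_univ _, by rw [ZMod.val_cast_of_lt hk]⟩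
    rw [h1, h2, lg_prod hm _ _ fun j _ => hnz2 j s (Or.inr hs)]
  -- `V = ∑_j H j = q^{-i} • V`, while `q^i ≠ 1`
  have hV : V = 0 := by
    have h1 : ∑ j : ZMod q, H j = V := by
      rw [Finset.sum_eq_single 0 (fun j _ hj => hH j hj) (by simp), hH0]
    have h2 : ∑ j : ZMod q, H j = ∑ s : ZMod p, s ^ i • f (q * s) := by
      simp only [H]
      rw [Finset.sum_comm]
      refine Finset.sum_congr rfl fun s _ => ?_
      rw [← Finset.smul_sum]
      by_cases hs : s = 0
      · simp [hs, zero_pow (show i ≠ 0 by omega)]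
      · rw [hdist s hs]
    have h3 := weighted_sum_comp_mul f i hq0
    rw [← h2, h1] at h3
    have h4 : ((q : ZMod p) ^ i - 1) • V = 0 := by
      rw [sub_smul, one_smul, h3]; exact sub_self V
    exact (smul_eq_zero.1 h4).resolve_left (sub_ne_zero.2 hqi)
  have hF : ∀ s : ℕ, 1 ≤ s → s < p → (1 - ζ ^ (ν * (s : ℤ)) ≠ 0 ∧ 1 - ζ ^ s ≠ 0) := by
    intro s hs1 hs2
    have hs : (s : ZMod p) ≠ 0 := by
      rw [Ne, ZMod.natCast_eq_zero_iff]
      exact fun h => absurd (Nat.le_of_dvd hs1 h) (by omega)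
    refine ⟨hnz1 _ (by push_cast; exact mul_ne_zero hν hs), ?_⟩
    have := hnz1 (s : ℤ) (by simpa using hs)
    rwa [zpow_natCast] at this
  have hF0 : ∀ s : ℕ, 1 ≤ s → s < p → ζ ^ ((((p + 1) / 2 : ℕ) : ℤ) * (1 - ν) * (s : ℤ)) *
      ((1 - ζ ^ (ν * (s : ℤ))) / (1 - ζ ^ s)) ≠ 0 := fun s hs1 hs2 =>
    mul_ne_zero (zpow_ne_zero _ hζ0) (div_ne_zero (hF s hs1 hs2).1 (hF s hs1 hs2).2)
  have hne : ∏ s ∈ Finset.Icc 1 (p - 1),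
      (ζ ^ ((((p + 1) / 2 : ℕ) : ℤ) * (1 - ν) * (s : ℤ)) *
      ((1 - ζ ^ (ν * (s : ℤ))) / (1 - ζ ^ s))) ^ (s ^ i) ≠ 0 := by
    refine Finset.prod_ne_zero_iff.2 fun s hs => pow_ne_zero _ ?_
    rw [Finset.mem_Icc] at hs
    exact hF0 s hs.1 (by have := hp.pos; omega)
  refine (hk _ hne).1 ?_
  rw [lg_weighted_Icc hm hi1 _ hF0]
  have hterm : ∀ s : ZMod p, s ^ i • lg (ζ ^ ((((p + 1) / 2 : ℕ) : ℤ) * (1 - ν) * (s.val : ℤ)) *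
      ((1 - ζ ^ (ν * (s.val : ℤ))) / (1 - ζ ^ s.val))) =
      s ^ i • s • (((((p + 1) / 2 : ℕ) : ZMod p) * (1 - ν)) • lg ζ) + s ^ i • f (ν * s)
        - s ^ i • f s := by
    intro s
    by_cases hs : s = 0
    · simp [hs, zero_pow (show i ≠ 0 by omega)]
    have hs1 : 1 ≤ s.val := Nat.one_le_iff_ne_zero.2 (by simpa using hs)
    obtain ⟨n1, n2⟩ := hF s.val hs1 s.val_lt
    rw [hm _ _ (zpow_ne_zero _ hζ0) (div_ne_zero n1 n2), lg_div hm n1 n2, hlgζ, hf]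
    rw [← smul_add, ← smul_sub, smul_smul s]
    congr 1
    have : (((ν * (s.val : ℤ) : ℤ)) : ZMod p) = ν * s := by simp
    rw [this, add_sub_assoc]
    congr 2
    generalize (p + 1) / 2 = c
    push_cast
    rw [ZMod.natCast_zmod_val]
    ring
  rw [Finset.sum_congr rfl fun s _ => hterm s, Finset.sum_sub_distrib, Finset.sum_add_distrib,
    hsum1, zero_add]
  have h3 := weighted_sum_comp_mul f i hν
  change _ = V at h3
  rw [hV] at h3
  rw [(smul_eq_zero.1 h3).resolve_left (pow_ne_zero _ hν), zero_sub, neg_eq_zero]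
  exact hV

/-! ### Radical extensions inside `ℂ` -/

theorem primRoot_isPrimitiveRoot {m : ℕ} (hm : m ≠ 0) : IsPrimitiveRoot (primRoot m) m :=
  Complex.isPrimitiveRoot_exp m hm

theorem mem_of_pow_eq_pow {k : Type*} [Field k] [Algebra k ℂ] (L : IntermediateField k ℂ) {p : ℕ}
    (hp : p ≠ 0) (hζ : primRoot p ∈ L) {y u : ℂ} (hy : y ∈ L) (h : y ^ p = u ^ p) : u ∈ L := by
  by_cases hy0 : y = 0
  · rw [hy0, zero_pow hp] at h
    rw [pow_eq_zero_iff hp |>.1 h.symm]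
    exact L.zero_mem
  · have h1 : (u / y) ^ p = 1 := by rw [div_pow, h, div_self]; rw [← h]; exact pow_ne_zero _ hy0
    have : NeZero p := ⟨hp⟩
    obtain ⟨n, _, hn⟩ := (primRoot_isPrimitiveRoot hp).eq_pow_of_pow_eq_one h1
    have : u = primRoot p ^ n * y := by rw [hn]; field_simp
    rw [this]
    exact L.mul_mem (L.pow_mem hζ n) hy

theorem minpoly_of_pow_eq {k : Type*} [Field k] [Algebra k ℂ] {p : ℕ} (hp : p.Prime) {a : k}
    {u : ℂ} (hu : u ^ p = algebraMap k ℂ a) (h : ∀ b : k, b ^ p ≠ a) :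
    minpoly k u = Polynomial.X ^ p - Polynomial.C a := by
  symm
  refine minpoly.eq_of_irreducible_of_monic (X_pow_sub_C_irreducible_of_prime hp h) ?_
    (Polynomial.monic_X_pow_sub_C a hp.ne_zero)
  simp [hu]

theorem finrank_adjoin_pthRoot {k : Type*} [Field k] [Algebra k ℂ] {p : ℕ} (hp : p.Prime) {a : k}
    {u : ℂ} (hu : u ^ p = algebraMap k ℂ a) (h : ∀ b : k, b ^ p ≠ a) :
    Module.finrank k (IntermediateField.adjoin k ({u} : Set ℂ)) = p := by
  have hm := minpoly_of_pow_eq hp hu h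
  rw [IntermediateField.adjoin.finrank, hm, Polynomial.natDegree_X_pow_sub_C]
  exact ⟨_, Polynomial.monic_X_pow_sub_C a hp.ne_zero, by simp [hu]⟩

/-! ### The maximal real subfield -/

theorem conj_primRoot {m : ℕ} (hm : m ≠ 0) :
    (starRingEnd ℂ) (primRoot m) = (primRoot m)⁻¹ :=
  (Complex.inv_eq_conj ((primRoot_isPrimitiveRoot hm).norm'_eq_one hm)).symm

theorem conj_of_mem_maxRealSubfield {p : ℕ} (hp : p ≠ 0) {x : ℂ} (hx : x ∈ maxRealSubfield p) :
    (starRingEnd ℂ) x = x := by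
  unfold maxRealSubfield at hx
  induction hx using IntermediateField.adjoin_induction with
  | mem x hx =>
    rw [Set.mem_singleton_iff] at hx
    rw [hx, map_add, map_inv₀, conj_primRoot hp, inv_inv, add_comm]
  | algebraMap x => simp
  | add x y _ _ hx hy => rw [map_add, hx, hy]
  | inv x _ hx => rw [map_inv₀, hx]
  | mul x y _ _ hx hy => rw [map_mul, hx, hy]

theorem pow_add_inv_pow_mem {p : ℕ} (hp : p ≠ 0) (n : ℕ) :
    primRoot p ^ n + (primRoot p)⁻¹ ^ n ∈ maxRealSubfield p := by
  have h0 : primRoot p ≠ 0 := (primRoot_isPrimitiveRoot hp).ne_zero hp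
  have ht : primRoot p + (primRoot p)⁻¹ ∈ maxRealSubfield p :=
    IntermediateField.subset_adjoin _ _ rfl
  induction n using Nat.twoStepInduction with
  | zero => simpa using add_mem (one_mem (maxRealSubfield p)) (one_mem _)
  | one => simpa using ht
  | more n h1 h2 =>
    have : primRoot p ^ (n + 2) + (primRoot p)⁻¹ ^ (n + 2) =
        (primRoot p + (primRoot p)⁻¹) * (primRoot p ^ (n + 1) + (primRoot p)⁻¹ ^ (n + 1))
          - (primRoot p ^ n + (primRoot p)⁻¹ ^ n) := by
      have e := mul_inv_cancel₀ h0
      linear_combination (-primRoot p ^ n - (primRoot p)⁻¹ ^ n) * e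
    rw [this]
    exact sub_mem (mul_mem ht h2) h1

/-- A real `x = f(ζ)` equals `(f(ζ) + f(ζ⁻¹)) / 2`, a combination of the `ζ^n + ζ^{-n}`. -/
theorem mem_maxRealSubfield {p : ℕ} (hp : p ≠ 0) {x : ℂ}
    (hx : x ∈ IntermediateField.adjoin ℚ ({primRoot p} : Set ℂ))
    (hr : (starRingEnd ℂ) x = x) : x ∈ maxRealSubfield p := by
  have hint : IsIntegral ℚ (primRoot p) :=
    ((primRoot_isPrimitiveRoot hp).isIntegral (Nat.pos_of_ne_zero hp)).tower_top
  obtain ⟨f, rfl⟩ : ∃ f : Polynomial ℚ, Polynomial.aeval (primRoot p) f = x := by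
    rw [← IntermediateField.mem_toSubalgebra,
      IntermediateField.adjoin_simple_toSubalgebra_of_isAlgebraic hint.isAlgebraic,
      Algebra.adjoin_singleton_eq_range_aeval] at hx
    exact hx
  have key : ∀ f : Polynomial ℚ, Polynomial.aeval (primRoot p) f +
      Polynomial.aeval (primRoot p)⁻¹ f ∈ maxRealSubfield p := by
    intro f
    induction f using Polynomial.induction_on' with
    | add f g hf hg =>
      rw [map_add, map_add, add_add_add_comm]
      exact add_mem hf hg
    | monomial n a =>
      rw [Polynomial.aeval_monomial, Polynomial.aeval_monomial, ← mul_add]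
      exact mul_mem (IntermediateField.algebraMap_mem _ a) (pow_add_inv_pow_mem hp n)
  have h2 : Polynomial.aeval (primRoot p)⁻¹ f = Polynomial.aeval (primRoot p) f := by
    rw [← conj_primRoot hp]
    conv_rhs => rw [← hr]
    have := Polynomial.aeval_algHom_apply
      ((Complex.conjAe.toAlgHom).restrictScalars ℚ) (primRoot p) f
    exact this
  have h := key f
  rw [h2, ← two_mul] at h
  have : Polynomial.aeval (primRoot p) f = (algebraMap ℚ ℂ (1 / 2)) *
      (2 * Polynomial.aeval (primRoot p) f) := by
    rw [← mul_assoc]; simp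
  rw [this]
  exact mul_mem (IntermediateField.algebraMap_mem _ _) h

theorem maxRealSubfield_le_cycField {p q : ℕ} : maxRealSubfield p ≤ cycField p q := by
  unfold maxRealSubfield
  rw [IntermediateField.adjoin_simple_le_iff]
  have : primRoot p ∈ cycField p q := IntermediateField.subset_adjoin _ _ (by simp)
  exact add_mem this (inv_mem this)

theorem cycUnit_mem {p i : ℕ} {ν : ℤ} :
    cycUnit p i ν ∈ IntermediateField.adjoin ℚ ({primRoot p} : Set ℂ) := by
  have h : primRoot p ∈ IntermediateField.adjoin ℚ ({primRoot p} : Set ℂ) :=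
    IntermediateField.subset_adjoin _ _ rfl
  unfold cycUnit
  exact prod_mem fun s _ => pow_mem (mul_mem (zpow_mem h _) (div_mem
    (sub_mem (one_mem _) (zpow_mem h _)) (sub_mem (one_mem _) (pow_mem h _)))) _

/-! ### Descent from `E` to `F⁺` -/

/-- A real `p`-th root of an element of `F⁺` that lies in `E` already lies in `F⁺`. -/
theorem descend {p q : ℕ} (hp : p.Prime) (hq : q.Prime) (hpo : Odd p) {u : ℝ}
    (hup : (u : ℂ) ^ p ∈ maxRealSubfield p) (hu : (u : ℂ) ∈ cycField p q) :
    (u : ℂ) ∈ maxRealSubfield p := by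
  by_contra hnot
  have hζ := primRoot_isPrimitiveRoot hp.ne_zero
  let F := maxRealSubfield p
  have hu0 : (u : ℂ) ≠ 0 := fun h => hnot (h ▸ zero_mem _)
  -- elements of `F⁺` are real, and real `p`-th roots are unique for odd `p`
  have hpow : ∀ b : F, b ^ p ≠ ⟨(u : ℂ) ^ p, hup⟩ := by
    intro b hb
    have hb' : (b : ℂ) ^ p = (u : ℂ) ^ p := congrArg Subtype.val hb
    obtain ⟨r, hr⟩ := Complex.conj_eq_iff_real.1 (conj_of_mem_maxRealSubfield hp.ne_zero b.2)
    rw [hr] at hb'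
    have : r = u := hpo.strictMono_pow.injective (by exact_mod_cast hb')
    exact hnot (by rw [← this, ← hr]; exact b.2)
  have hmin := minpoly_of_pow_eq (k := F) (u := (u : ℂ)) hp rfl hpow
  have hS : ∀ s ∈ ({primRoot p, primRoot q} : Set ℂ), IsIntegral F s ∧
      (Polynomial.map (algebraMap F ℂ) (minpoly F s)).Splits := by
    intro s hs
    refine ⟨?_, IsAlgClosed.splits _⟩
    rcases hs with rfl | rfl
    · exact (hζ.isIntegral hp.pos).tower_top
    · exact ((primRoot_isPrimitiveRoot hq.ne_zero).isIntegral hq.pos).tower_top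
  have huS : (u : ℂ) ∈ IntermediateField.adjoin F ({primRoot p, primRoot q} : Set ℂ) := by
    have : cycField p q ≤ (IntermediateField.adjoin F
        ({primRoot p, primRoot q} : Set ℂ)).restrictScalars ℚ := by
      unfold cycField
      rw [IntermediateField.adjoin_le_iff]
      exact IntermediateField.subset_adjoin F _
    exact this hu
  -- `ζ_p u` is a conjugate of `u` over `F⁺`, so some embedding `φ` of `E` maps `u` to it
  have hroot : Polynomial.aeval (primRoot p * (u : ℂ)) (minpoly F (u : ℂ)) = 0 := by
    rw [hmin]
    simp only [map_sub, map_pow, Polynomial.aeval_X, Polynomial.aeval_C, mul_pow, hζ.pow_eq_one,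
      one_mul]
    exact sub_self _
  obtain ⟨φ, hφ⟩ := IntermediateField.exists_algHom_adjoin_of_splits_of_aeval hS huS hroot
  have hunity : ∀ (x : IntermediateField.adjoin F ({primRoot p, primRoot q} : Set ℂ)) (m : ℕ),
      m ≠ 0 → (x : ℂ) = primRoot m → (starRingEnd ℂ) (φ x) = φ x⁻¹ := by
    intro x m hm hx
    have h1 : x ^ m = 1 := by
      ext
      push_cast
      rw [hx, (primRoot_isPrimitiveRoot hm).pow_eq_one]
    have h2 : φ x ^ m = 1 := by rw [← map_pow, h1, map_one]
    rw [map_inv₀, Complex.inv_eq_conj (Complex.norm_eq_one_of_pow_eq_one h2 hm)]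
  -- `φ` commutes with complex conjugation
  have hconj : ∀ (x : ℂ) (hx : x ∈ IntermediateField.adjoin F ({primRoot p, primRoot q} : Set ℂ)),
      ∃ y : IntermediateField.adjoin F ({primRoot p, primRoot q} : Set ℂ),
        (y : ℂ) = (starRingEnd ℂ) x ∧ (starRingEnd ℂ) (φ ⟨x, hx⟩) = φ y := by
    intro x hx
    induction hx using IntermediateField.adjoin_induction with
    | mem x hx =>
      rcases hx with rfl | rfl
      · exact ⟨⟨primRoot p, IntermediateField.subset_adjoin F _ (by simp)⟩⁻¹,
          by simp [conj_primRoot hp.ne_zero], hunity _ p hp.ne_zero rfl⟩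
      · exact ⟨⟨primRoot q, IntermediateField.subset_adjoin F _ (by simp)⟩⁻¹,
          by simp [conj_primRoot hq.ne_zero], hunity _ q hq.ne_zero rfl⟩
    | algebraMap x =>
      have hx := conj_of_mem_maxRealSubfield hp.ne_zero x.2
      refine ⟨algebraMap F _ x, hx.symm, ?_⟩
      have : φ ⟨algebraMap F ℂ x, IntermediateField.algebraMap_mem _ x⟩ = (x : ℂ) := φ.commutes x
      rw [this, hx]
      exact this.symm
    | add x y hx hy h1 h2 =>
      obtain ⟨a, ha, ha'⟩ := h1
      obtain ⟨b, hb, hb'⟩ := h2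
      refine ⟨a + b, by push_cast; rw [ha, hb, map_add], ?_⟩
      rw [map_add, ← ha', ← hb', ← map_add, ← map_add]; rfl
    | inv x hx h1 =>
      obtain ⟨a, ha, ha'⟩ := h1
      refine ⟨a⁻¹, by push_cast; rw [ha, map_inv₀], ?_⟩
      rw [map_inv₀, ← ha', ← map_inv₀, ← map_inv₀]; rfl
    | mul x y hx hy h1 h2 =>
      obtain ⟨a, ha, ha'⟩ := h1
      obtain ⟨b, hb, hb'⟩ := h2
      refine ⟨a * b, by push_cast; rw [ha, hb, map_mul], ?_⟩
      rw [map_mul, ← ha', ← hb', ← map_mul, ← map_mul]; rfl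
  obtain ⟨y, hy, hy'⟩ := hconj u huS
  have hyu : y = ⟨(u : ℂ), huS⟩ := by
    ext
    rw [hy, Complex.conj_ofReal]
  rw [hyu, hφ, map_mul, Complex.conj_ofReal, conj_primRoot hp.ne_zero] at hy'
  have h1 : (primRoot p)⁻¹ = primRoot p := mul_right_cancel₀ hu0 hy'
  have h2 : primRoot p ^ 2 = 1 := by
    have := mul_inv_cancel₀ (hζ.ne_zero hp.ne_zero)
    rw [h1] at this
    rw [sq, this]
  have h3 := (Nat.prime_dvd_prime_iff_eq hp Nat.prime_two).1 ((hζ.pow_eq_one_iff_dvd 2).1 h2)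
  rw [h3] at hpo
  exact absurd hpo (by decide)

theorem finrank_eq {p q : ℕ} (hp : p.Prime) (hq : q.Prime) (hpo : Odd p) {u : ℝ}
    (hup : (u : ℂ) ^ p ∈ maxRealSubfield p) :
    Module.finrank (cycField p q) (IntermediateField.adjoin (cycField p q) ({(u : ℂ)} : Set ℂ)) =
      Module.finrank (maxRealSubfield p)
        (IntermediateField.adjoin (maxRealSubfield p) ({(u : ℂ)} : Set ℂ)) := by
  by_cases hu : (u : ℂ) ∈ maxRealSubfield p
  · rw [IntermediateField.finrank_adjoin_simple_eq_one_iff.2,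
      IntermediateField.finrank_adjoin_simple_eq_one_iff.2]
    · exact ⟨⟨u, hu⟩, rfl⟩
    · exact ⟨⟨u, maxRealSubfield_le_cycField hu⟩, rfl⟩
  · have hE : ∀ b : cycField p q, b ^ p ≠ ⟨(u : ℂ) ^ p, maxRealSubfield_le_cycField hup⟩ :=
      fun b hb => hu (descend hp hq hpo hup (mem_of_pow_eq_pow (cycField p q) hp.ne_zero
        (IntermediateField.subset_adjoin _ _ (by simp)) b.2 (congrArg Subtype.val hb)))
    have hF : ∀ b : maxRealSubfield p, b ^ p ≠ ⟨(u : ℂ) ^ p, hup⟩ := by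
      intro b hb
      refine hu (descend hp hq hpo hup (mem_of_pow_eq_pow (cycField p q) hp.ne_zero
        (IntermediateField.subset_adjoin _ _ (by simp)) (maxRealSubfield_le_cycField b.2)
          (congrArg Subtype.val hb)))
    rw [finrank_adjoin_pthRoot (k := cycField p q) hp rfl hE,
      finrank_adjoin_pthRoot (k := maxRealSubfield p) hp rfl hF]

/-! ### The degree comparison -/

theorem etaElt'_mem {p q i j : ℕ} : etaElt' p q i j ∈ cycField p q := by
  have h1 : primRoot p ∈ cycField p q := IntermediateField.subset_adjoin _ _ (by simp)
  have h2 : primRoot q ∈ cycField p q := IntermediateField.subset_adjoin _ _ (by simp)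
  unfold etaElt'
  exact prod_mem fun s _ => pow_mem (sub_mem (one_mem _) (mul_mem (pow_mem h2 _) (pow_mem h1 _))) _

/-- For distinct odd primes `p, q`, `1 ≤ i ≤ p-3` with
`q^i ≢ 1 (mod p)`, `ν` a generator of `(ℤ/pℤ)^×`, `u` the real `p`-th root of
`U_i = U_i(ν)`, and `M_i = E(α_{i,1}, …, α_{i,(q-1)/2})` where `α_{i,j}^p = η'_{i,j}`:
`[M_i : E] ≥ [E(u) : E]` and `[E(u) : E] = [F⁺(u) : F⁺]`
with `F⁺ = ℚ(ζ_p + ζ_p⁻¹)`. -/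
theorem degree_Mi_ge_degree_adjoin_root (p q : ℕ) (hp : p.Prime) (hq : q.Prime)
    (hpo : Odd p) (hqo : Odd q) (hpq : p ≠ q)
    (i : ℕ) (hi1 : 1 ≤ i) (hi : i ≤ p - 3)
    (hqi : ¬ (p : ℤ) ∣ ((q : ℤ) ^ i - 1))
    (ν : ℤ) (hν : ∀ a : ZMod p, a ≠ 0 → ∃ k : ℕ, ((ν : ZMod p)) ^ k = a)
    (u : ℝ) (hu : ((u : ℂ)) ^ p = cycUnit p i ν)
    (α : ℕ → ℂ) (hα : ∀ j, 1 ≤ j → j ≤ (q - 1) / 2 → α j ^ p = etaElt' p q i j)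
    (E : IntermediateField ℚ ℂ) (hE : E = cycField p q)
    (F : IntermediateField ℚ ℂ) (hF : F = maxRealSubfield p) :
    Module.finrank E (IntermediateField.adjoin E ({(u : ℂ)} : Set ℂ)) ≤
      Module.finrank E (IntermediateField.adjoin E (α '' {j : ℕ | 1 ≤ j ∧ j ≤ (q - 1) / 2})) ∧
    Module.finrank E (IntermediateField.adjoin E ({(u : ℂ)} : Set ℂ)) =
      Module.finrank F (IntermediateField.adjoin F ({(u : ℂ)} : Set ℂ)) := by
  subst hE hF
  have hp0 := hp.ne_zero
  have hq0 := hq.ne_zero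
  have : Fact p.Prime := ⟨hp⟩
  have : Fact q.Prime := ⟨hq⟩
  have hp3 : 3 ≤ p := by
    have := hp.two_le
    obtain ⟨m, hm⟩ := hpo
    omega
  have hup : (u : ℂ) ^ p ∈ maxRealSubfield p := by
    refine mem_maxRealSubfield hp0 (hu ▸ cycUnit_mem) ?_
    rw [map_pow, Complex.conj_ofReal]
  refine ⟨?_, finrank_eq hp hq hpo hup⟩
  have hqi' : (q : ZMod p) ^ i ≠ 1 := by
    intro h
    apply hqi
    rw [← ZMod.intCast_zmod_eq_zero_iff_dvd]
    push_cast
    rw [h, sub_self]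
  have hν0 : (ν : ZMod p) ≠ 0 := by
    intro h
    -- the powers of `0` miss the nonzero class `2 ≠ 1`
    have h2 : (2 : ZMod p) ≠ 0 := by
      intro h2
      have : p ∣ 2 := (ZMod.natCast_eq_zero_iff 2 p).1 (by exact_mod_cast h2)
      exact absurd (Nat.le_of_dvd (by norm_num) this) (by omega)
    obtain ⟨k, hk⟩ := hν 2 h2
    rw [h] at hk
    rcases Nat.eq_zero_or_pos k with rfl | hk0
    · rw [pow_zero] at hk
      exact one_ne_zero (by linear_combination -hk : (1 : ZMod p) = 0)
    · rw [zero_pow hk0.ne'] at hk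
      exact h2 hk.symm
  set S : Set ℂ := α '' {j : ℕ | 1 ≤ j ∧ j ≤ (q - 1) / 2} with hS
  set M := IntermediateField.adjoin (cycField p q) S with hM
  have hfin : Finite S := by
    refine Set.Finite.image _ ((Set.finite_Icc 1 ((q - 1) / 2)).subset ?_)
    exact fun j hj => hj
  have hFD : FiniteDimensional (cycField p q) M := by
    refine IntermediateField.finiteDimensional_adjoin ?_
    rintro x ⟨j, hj, rfl⟩
    refine IsIntegral.of_pow hp.pos ?_
    rw [hα j hj.1 hj.2]
    exact isIntegral_algebraMap (x := (⟨_, etaElt'_mem⟩ : cycField p q))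
  refine IntermediateField.finrank_le_of_le_right ?_
  rw [IntermediateField.adjoin_simple_le_iff]
  have hζM : primRoot p ∈ M :=
    M.algebraMap_mem ⟨primRoot p, IntermediateField.subset_adjoin _ _ (by simp)⟩
  have hωM : primRoot q ∈ M :=
    M.algebraMap_mem ⟨primRoot q, IntermediateField.subset_adjoin _ _ (by simp)⟩
  have hinj : Function.Injective M.val := M.val.injective
  have hζ' : IsPrimitiveRoot (⟨primRoot p, hζM⟩ : M) p :=
    IsPrimitiveRoot.of_map_of_injective (f := M.val) (primRoot_isPrimitiveRoot hp0) hinj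
  have hω' : IsPrimitiveRoot (⟨primRoot q, hωM⟩ : M) q :=
    IsPrimitiveRoot.of_map_of_injective (f := M.val) (primRoot_isPrimitiveRoot hq0) hinj
  obtain ⟨y, hy⟩ := core hpo hqo hpq hζ' hω' hi1 (by omega) hqi' hν0 (by
    intro j hj1 hj2
    refine ⟨⟨α j, IntermediateField.subset_adjoin _ _ ⟨j, ⟨hj1, hj2⟩, rfl⟩⟩, hinj ?_⟩
    simp only [map_pow, map_prod, map_sub, map_one, map_mul]
    exact hα j hj1 hj2)
  refine mem_of_pow_eq_pow M hp0 hζM y.2 ?_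
  have h := congrArg M.val hy
  simp only [map_pow, map_prod, map_sub, map_one, map_mul, map_zpow₀, map_div₀] at h
  rw [hu]
  exact h
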